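/- For every fixed c > 0, liminf_{N→∞} d_TV(P^{t_N}(id, ·), U) ≥ 1 − exp(−(1/2)·(√(1 + e^c/2) − 1)²), where t_N = ⌊(N/(2b))·(log N − c)⌋ and N = 2n ranges over even integers. -/

import Mathlib

open scoped BigOperators

noncomputable section

namespace BRT

/-- The transition matrix of the biased random transposition shuffle on `𝔖_N` determined
by the set `A ⊆ [N]` (with `B = Aᶜ`) and the bias parameters `a`, `b`:
`P(x,y) = 2a²/N²` if `y x⁻¹` is a transposition of two elements of `A`, `2b²/N²` if it is a
transposition of two elements of `B`, `2ab/N²` if it transposes an element of `A` with one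
of `B`, `(a²|A| + b²|B|)/N²` if `y = x`, and `0` otherwise. -/
def transMat (a b : ℝ) {N : ℕ} (A : Finset (Fin N)) :
    Matrix (Equiv.Perm (Fin N)) (Equiv.Perm (Fin N)) ℝ :=
  fun x y =>
    if y = x then (a ^ 2 * A.card + b ^ 2 * Aᶜ.card) / (N : ℝ) ^ 2
    else if ∃ i j : Fin N, i ≠ j ∧ i ∈ A ∧ j ∈ A ∧ y * x⁻¹ = Equiv.swap i j then
      2 * a ^ 2 / (N : ℝ) ^ 2
    else if ∃ i j : Fin N, i ≠ j ∧ i ∉ A ∧ j ∉ A ∧ y * x⁻¹ = Equiv.swap i j then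
      2 * b ^ 2 / (N : ℝ) ^ 2
    else if ∃ i j : Fin N, i ∈ A ∧ j ∉ A ∧ y * x⁻¹ = Equiv.swap i j then
      2 * a * b / (N : ℝ) ^ 2
    else 0

/-- Total variation distance between two probability mass functions on a finite type. -/
def dTV {α : Type*} [Fintype α] (p q : α → ℝ) : ℝ :=
  (∑ x, |p x - q x|) / 2

/-- The uniform distribution on permutations of `Fin N`. -/
def unif (N : ℕ) : Equiv.Perm (Fin N) → ℝ :=
  fun _ => ((N.factorial : ℝ))⁻¹

/-- weight of a position -/
def wt (a b : ℝ) {N : ℕ} (A : Finset (Fin N)) (p : Fin N) : ℝ := if p ∈ A then a else b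

/-- one-step operator -/
def stepOp (a b : ℝ) {N : ℕ} (A : Finset (Fin N)) (h : Equiv.Perm (Fin N) → ℝ)
    (x : Equiv.Perm (Fin N)) : ℝ :=
  (∑ p, ∑ q, wt a b A p * wt a b A q * h (Equiv.swap p q * x)) / (N : ℝ) ^ 2

lemma swap_eq_iff {N : ℕ} {i j p q : Fin N} (hij : i ≠ j) :
    Equiv.swap p q = Equiv.swap i j ↔ (p = i ∧ q = j) ∨ (p = j ∧ q = i) := by
  constructor
  · intro h
    have hi := congrArg (fun f => f i) h
    have hj := congrArg (fun f => f j) h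
    simp only [Equiv.swap_apply_left, Equiv.swap_apply_right] at hi hj
    simp only [Equiv.swap_apply_def] at hi hj
    grind
  · rintro (⟨rfl, rfl⟩ | ⟨rfl, rfl⟩)
    · rfl
    · exact Equiv.swap_comm _ _

lemma sum_swap {N : ℕ} (w : Fin N → ℝ) {i j : Fin N} (hij : i ≠ j) :
    (∑ p, ∑ q, if Equiv.swap p q = Equiv.swap i j then w p * w q else 0) = 2 * (w i * w j) := by
  have h1 : ∀ p q : Fin N, (if Equiv.swap p q = Equiv.swap i j then w p * w q else 0) =
      (if p = i then (if q = j then w p * w q else 0) else 0) +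
      (if p = j then (if q = i then w p * w q else 0) else 0) := by
    intro p q
    simp only [swap_eq_iff hij]
    by_cases h1 : p = i <;> by_cases h2 : q = j <;> by_cases h3 : p = j <;>
      by_cases h4 : q = i <;> simp_all
  simp only [h1, Finset.sum_add_distrib, Finset.sum_ite_irrel, Finset.sum_ite_eq',
    Finset.mem_univ, if_true, Finset.sum_const_zero]
  ring

lemma trans_eq (a b : ℝ) {N : ℕ} (A : Finset (Fin N)) (x y : Equiv.Perm (Fin N)) :
    transMat a b A x y =
      (∑ p, ∑ q, if Equiv.swap p q * x = y then wt a b A p * wt a b A q else 0) / (N : ℝ) ^ 2 := by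
  have hre : ∀ p q : Fin N, (Equiv.swap p q * x = y) ↔ Equiv.swap p q = y * x⁻¹ := by
    intro p q
    exact eq_mul_inv_iff_mul_eq.symm
  simp only [hre]
  by_cases hxy : y = x
  · subst hxy
    have : ∀ p q : Fin N, (Equiv.swap p q = y * y⁻¹) ↔ p = q := by
      intro p q
      rw [mul_inv_cancel]
      exact Equiv.swap_eq_one_iff
    simp only [this, Finset.sum_ite_eq, Finset.mem_univ, if_true, transMat]
    congr 1
    have h2 : ∀ p : Fin N, wt a b A p * wt a b A p = (if p ∈ A then a ^ 2 else 0) +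
        (if p ∈ Aᶜ then b ^ 2 else 0) := by
      intro p
      by_cases hp : p ∈ A <;> simp [wt, hp] <;> ring
    simp only [h2, Finset.sum_add_distrib, Finset.sum_ite_mem, Finset.univ_inter,
      Finset.sum_const, nsmul_eq_mul]
    ring
  · unfold transMat
    rw [if_neg hxy]
    split_ifs with h1 h2 h3
    · obtain ⟨i, j, hij, hi, hj, h⟩ := h1
      rw [h, sum_swap _ hij]
      simp [wt, hi, hj]; ring
    · obtain ⟨i, j, hij, hi, hj, h⟩ := h2
      rw [h, sum_swap _ hij]
      simp [wt, hi, hj]; ring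
    · obtain ⟨i, j, hi, hj, h⟩ := h3
      have hij : i ≠ j := by rintro rfl; exact hj hi
      rw [h, sum_swap _ hij]
      simp [wt, hi, hj]; ring
    · have : ∀ p q : Fin N, ¬ (Equiv.swap p q = y * x⁻¹) := by
        intro p q h
        have hpq : p ≠ q := by
          rintro rfl
          apply hxy
          rw [Equiv.swap_self] at h
          have h' : (1 : Equiv.Perm (Fin N)) = y * x⁻¹ := h
          rw [eq_comm, mul_inv_eq_one] at h'
          exact h'
        by_cases hp : p ∈ A <;> by_cases hq : q ∈ A
        · exact h1 ⟨p, q, hpq, hp, hq, h.symm⟩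
        · exact h3 ⟨p, q, hp, hq, h.symm⟩
        · exact h3 ⟨q, p, hq, hp, by rw [Equiv.swap_comm]; exact h.symm⟩
        · exact h2 ⟨p, q, hpq, hp, hq, h.symm⟩
      simp [this]

lemma trans_sum (a b : ℝ) {N : ℕ} (A : Finset (Fin N)) (h : Equiv.Perm (Fin N) → ℝ)
    (x : Equiv.Perm (Fin N)) :
    ∑ y, transMat a b A x y * h y = stepOp a b A h x := by
  simp only [trans_eq, stepOp, div_mul_eq_mul_div, ← Finset.sum_div]
  congr 1
  simp only [Finset.sum_mul]
  rw [Finset.sum_comm]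
  refine Finset.sum_congr rfl fun p _ => ?_
  rw [Finset.sum_comm]
  refine Finset.sum_congr rfl fun q _ => ?_
  simp [ite_mul]

/-- expectation after `t` steps -/
def Ex (a b : ℝ) {N : ℕ} (A : Finset (Fin N)) (t : ℕ) (h : Equiv.Perm (Fin N) → ℝ) : ℝ :=
  ∑ y, (transMat a b A ^ t) 1 y * h y

lemma Ex_zero (a b : ℝ) {N : ℕ} (A : Finset (Fin N)) (h : Equiv.Perm (Fin N) → ℝ) :
    Ex a b A 0 h = h 1 := by
  simp [Ex, Matrix.one_apply]

lemma Ex_succ (a b : ℝ) {N : ℕ} (A : Finset (Fin N)) (t : ℕ) (h : Equiv.Perm (Fin N) → ℝ) :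
    Ex a b A (t + 1) h = Ex a b A t (stepOp a b A h) := by
  simp only [Ex, pow_succ, Matrix.mul_apply, ← trans_sum, Finset.sum_mul, Finset.mul_sum]
  rw [Finset.sum_comm]
  simp only [mul_assoc]

lemma wt_nonneg {a b : ℝ} (ha : 0 ≤ a) (hb : 0 ≤ b) {N : ℕ} (A : Finset (Fin N)) (p : Fin N) :
    0 ≤ wt a b A p := by
  unfold wt; split_ifs <;> assumption

lemma trans_nonneg {a b : ℝ} (ha : 0 ≤ a) (hb : 0 ≤ b) {N : ℕ} (A : Finset (Fin N))
    (x y : Equiv.Perm (Fin N)) : 0 ≤ transMat a b A x y := by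
  rw [trans_eq]
  apply div_nonneg _ (by positivity)
  refine Finset.sum_nonneg fun p _ => Finset.sum_nonneg fun q _ => ?_
  split_ifs
  · exact mul_nonneg (wt_nonneg ha hb _ _) (wt_nonneg ha hb _ _)
  · exact le_rfl

lemma pow_trans_nonneg {a b : ℝ} (ha : 0 ≤ a) (hb : 0 ≤ b) {N : ℕ} (A : Finset (Fin N))
    (t : ℕ) : ∀ x y : Equiv.Perm (Fin N), 0 ≤ (transMat a b A ^ t) x y := by
  induction t with
  | zero => intro x y; simp only [pow_zero, Matrix.one_apply]; split_ifs <;> norm_num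
  | succ t ih =>
    intro x y
    rw [pow_succ, Matrix.mul_apply]
    exact Finset.sum_nonneg fun z _ => mul_nonneg (ih _ _) (trans_nonneg ha hb _ _ _)

lemma Ex_mono {a b : ℝ} (ha : 0 ≤ a) (hb : 0 ≤ b) {N : ℕ} (A : Finset (Fin N)) (t : ℕ)
    {h k : Equiv.Perm (Fin N) → ℝ} (hk : ∀ x, h x ≤ k x) : Ex a b A t h ≤ Ex a b A t k :=
  Finset.sum_le_sum fun y _ => mul_le_mul_of_nonneg_left (hk y) (pow_trans_nonneg ha hb A t _ _)

lemma Ex_add (a b : ℝ) {N : ℕ} (A : Finset (Fin N)) (t : ℕ) (h k : Equiv.Perm (Fin N) → ℝ) :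
    Ex a b A t (fun x => h x + k x) = Ex a b A t h + Ex a b A t k := by
  simp [Ex, mul_add, Finset.sum_add_distrib]

lemma Ex_smul (a b : ℝ) {N : ℕ} (A : Finset (Fin N)) (t : ℕ) (c : ℝ)
    (h : Equiv.Perm (Fin N) → ℝ) :
    Ex a b A t (fun x => c * h x) = c * Ex a b A t h := by
  simp only [Ex, Finset.mul_sum]
  exact Finset.sum_congr rfl fun y _ => by ring

lemma sum_wt {a b : ℝ} (hab : a + b = 2) {n : ℕ} (A : Finset (Fin (2 * n))) (hA : A.card = n) :
    ∑ p, wt a b A p = 2 * n := by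
  have h2 : ∀ p, wt a b A p = (if p ∈ A then a else 0) + (if p ∈ Aᶜ then b else 0) := by
    intro p
    by_cases hp : p ∈ A <;> simp [wt, hp]
  simp only [h2, Finset.sum_add_distrib, Finset.sum_ite_mem, Finset.univ_inter,
      Finset.sum_const, nsmul_eq_mul, Finset.card_compl, hA, Fintype.card_fin]
  have : 2 * n - n = n := by omega
  rw [this, ← hab]; ring

lemma stepOp_const {a b : ℝ} (hab : a + b = 2) {n : ℕ} (hn : 0 < n) (A : Finset (Fin (2 * n)))
    (hA : A.card = n) (c : ℝ) (x : Equiv.Perm (Fin (2 * n))) :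
    stepOp a b A (fun _ => c) x = c := by
  unfold stepOp
  simp only [← Finset.sum_mul, ← Finset.mul_sum, sum_wt hab A hA]
  have : (n : ℝ) ≠ 0 := by positivity
  push_cast
  field_simp

lemma Ex_const {a b : ℝ} (hab : a + b = 2) {n : ℕ} (hn : 0 < n) (A : Finset (Fin (2 * n)))
    (hA : A.card = n) (c : ℝ) (t : ℕ) : Ex a b A t (fun _ => c) = c := by
  induction t with
  | zero => rw [Ex_zero]
  | succ t ih =>
    rw [Ex_succ]
    have : stepOp a b A (fun _ => c) = fun _ => c := funext fun x => stepOp_const hab hn A hA c x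
    rw [this, ih]

lemma stepOp_le {a b : ℝ} (ha : 0 ≤ a) (hb : 0 ≤ b) {N : ℕ} (A : Finset (Fin N))
    (h : Equiv.Perm (Fin N) → ℝ) (x : Equiv.Perm (Fin N)) (k : Fin N → Fin N → ℝ)
    (hk : ∀ p q, h (Equiv.swap p q * x) ≤ k p q) :
    stepOp a b A h x ≤ (∑ p, ∑ q, wt a b A p * wt a b A q * k p q) / (N : ℝ) ^ 2 := by
  unfold stepOp
  gcongr with p _ q _
  · exact mul_nonneg (wt_nonneg ha hb _ _) (wt_nonneg ha hb _ _)
  · exact hk p q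

/-- indicator of the complement of `A` -/
def ind {N : ℕ} (A : Finset (Fin N)) (z : Fin N) : ℝ := if z ∈ A then 0 else 1

/-- number of cards of `B` located in `B` -/
def Vr {N : ℕ} (A : Finset (Fin N)) (x : Equiv.Perm (Fin N)) : ℝ := ∑ i, ind A i * ind A (x i)

lemma sum_perm {N : ℕ} (x : Equiv.Perm (Fin N)) (f g : Fin N → ℝ) :
    ∑ p, f p * g (x⁻¹ p) = ∑ i, f (x i) * g i := by
  rw [← Equiv.sum_comp x]
  simp

lemma Vr_step {N : ℕ} (A : Finset (Fin N)) (x : Equiv.Perm (Fin N)) (p q : Fin N) :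
    Vr A (Equiv.swap p q * x) =
      Vr A x + (ind A (x⁻¹ p) - ind A (x⁻¹ q)) * (ind A q - ind A p) := by
  unfold Vr
  have h : ∀ i, ind A i * ind A ((Equiv.swap p q * x) i) = ind A i * ind A (x i) +
      ((if i = x⁻¹ p then ind A i * (ind A q - ind A p) else 0) +
       (if i = x⁻¹ q then ind A i * (ind A p - ind A q) else 0)) := by
    intro i
    simp only [Equiv.Perm.mul_apply, Equiv.swap_apply_def, Equiv.Perm.eq_inv_iff_eq]
    by_cases h1 : x i = p
    · by_cases h2 : x i = q
      · have : p = q := by rw [← h1, h2]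
        subst this
        simp [h1]
      · simp [h1, h1 ▸ h2]; ring
    · by_cases h2 : x i = q
      · simp [h2]
        have : ¬ q = p := by rw [← h2]; exact h1
        simp [this]; ring
      · simp [h1, h2]
  simp only [h, Finset.sum_add_distrib, Finset.sum_ite_eq', Finset.mem_univ, if_true]
  ring

lemma sum_ind {n : ℕ} (A : Finset (Fin (2 * n))) (hA : A.card = n) : ∑ p, ind A p = n := by
  have h2 : ∀ p, ind A p = (if p ∈ Aᶜ then 1 else 0) := by
    intro p
    by_cases hp : p ∈ A <;> simp [ind, hp]
  simp only [h2, Finset.sum_ite_mem, Finset.univ_inter,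
      Finset.sum_const, nsmul_eq_mul, Finset.card_compl, hA, Fintype.card_fin]
  have : 2 * n - n = n := by omega
  rw [this]; ring

lemma wt_ind (a b : ℝ) {N : ℕ} (A : Finset (Fin N)) (p : Fin N) :
    wt a b A p = a + (b - a) * ind A p := by
  by_cases hp : p ∈ A <;> simp [wt, ind, hp]

lemma ind_sq {N : ℕ} (A : Finset (Fin N)) (p : Fin N) : ind A p * ind A p = ind A p := by
  by_cases hp : p ∈ A <;> simp [ind, hp]

lemma wt_mul_ind (a b : ℝ) {N : ℕ} (A : Finset (Fin N)) (p : Fin N) :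
    wt a b A p * ind A p = b * ind A p := by
  by_cases hp : p ∈ A <;> simp [wt, ind, hp]

lemma sum_wt_ind (a b : ℝ) {n : ℕ} (A : Finset (Fin (2 * n))) (hA : A.card = n) :
    ∑ p, wt a b A p * ind A p = b * n := by
  simp only [wt_mul_ind, ← Finset.mul_sum, sum_ind A hA]

lemma sum_wt_inv (a b : ℝ) {n : ℕ} (A : Finset (Fin (2 * n))) (hA : A.card = n)
    (x : Equiv.Perm (Fin (2 * n))) :
    ∑ p, wt a b A p * ind A (x⁻¹ p) = a * n + (b - a) * Vr A x := by
  rw [sum_perm x (wt a b A) (ind A)]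
  simp only [wt_ind, add_mul, Finset.sum_add_distrib, ← Finset.mul_sum, sum_ind A hA, Vr,
    mul_assoc, mul_comm (ind A (x _))]

lemma sum_wt_inv_ind (a b : ℝ) {n : ℕ} (A : Finset (Fin (2 * n)))
    (x : Equiv.Perm (Fin (2 * n))) :
    ∑ p, wt a b A p * (ind A (x⁻¹ p) * ind A p) = b * Vr A x := by
  have : ∀ p, wt a b A p * (ind A (x⁻¹ p) * ind A p) = (b * ind A p) * ind A (x⁻¹ p) := by
    intro p
    rw [← wt_mul_ind a b]; ring
  simp only [this]
  rw [sum_perm x (fun p => b * ind A p) (ind A)]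
  simp only [Vr, Finset.mul_sum]
  exact Finset.sum_congr rfl fun i _ => by ring

lemma sum_drift {a b : ℝ} (hab : a + b = 2) {n : ℕ} (A : Finset (Fin (2 * n))) (hA : A.card = n)
    (x : Equiv.Perm (Fin (2 * n))) :
    ∑ p, ∑ q, wt a b A p * wt a b A q *
      ((ind A (x⁻¹ p) - ind A (x⁻¹ q)) * (ind A q - ind A p)) =
      - (4 * a * b * n) * (Vr A x - n / 2) := by
  have h : ∀ p q, wt a b A p * wt a b A q *
      ((ind A (x⁻¹ p) - ind A (x⁻¹ q)) * (ind A q - ind A p)) =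
      (wt a b A p * ind A (x⁻¹ p)) * (wt a b A q * ind A q) +
      (wt a b A p * ind A p) * (wt a b A q * ind A (x⁻¹ q)) -
      (wt a b A p * (ind A (x⁻¹ p) * ind A p)) * wt a b A q -
      wt a b A p * (wt a b A q * (ind A (x⁻¹ q) * ind A q)) := by
    intro p q; ring
  simp only [h, Finset.sum_add_distrib, Finset.sum_sub_distrib, ← Finset.mul_sum,
    ← Finset.sum_mul, sum_wt_ind a b A hA, sum_wt_inv a b A hA, sum_wt_inv_ind a b A,
    sum_wt hab A hA]
  have : a = 2 - b := by linarith
  subst this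
  ring

/-- normalised fluctuation of `Vr` -/
def Ur {n : ℕ} (A : Finset (Fin (2 * n))) (x : Equiv.Perm (Fin (2 * n))) : ℝ :=
  (Vr A x - n / 2) / n

lemma sum_ww {a b : ℝ} (hab : a + b = 2) {n : ℕ} (A : Finset (Fin (2 * n))) (hA : A.card = n) 
    (c : ℝ) : ∑ p, ∑ q, wt a b A p * wt a b A q * c = 4 * n ^ 2 * c := by
  simp only [← Finset.sum_mul, ← Finset.mul_sum, sum_wt hab A hA]
  ring

lemma step_Usq {a b : ℝ} (ha : 0 ≤ a) (hb : 0 ≤ b) (hab : a + b = 2) {n : ℕ} (hn : 0 < n)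
    (A : Finset (Fin (2 * n))) (hA : A.card = n) (x : Equiv.Perm (Fin (2 * n))) :
    stepOp a b A (fun y => Ur A y ^ 2) x ≤ (1 - 2 * a * b / n) * Ur A x ^ 2 + 1 / n ^ 2 := by
  have hn' : (0 : ℝ) < n := by exact_mod_cast hn
  refine (stepOp_le ha hb A _ x (fun p q => (Ur A x ^ 2 + 1 / n ^ 2) + 
    ((ind A (x⁻¹ p) - ind A (x⁻¹ q)) * (ind A q - ind A p)) * (2 * Ur A x / n)) ?_).trans ?_
  · intro p q
    have h1 : Ur A (Equiv.swap p q * x) = Ur A x +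
        ((ind A (x⁻¹ p) - ind A (x⁻¹ q)) * (ind A q - ind A p)) / n := by
      unfold Ur
      rw [Vr_step]; ring
    have h2 : ((ind A (x⁻¹ p) - ind A (x⁻¹ q)) * (ind A q - ind A p)) ^ 2 ≤ 1 := by
      unfold ind
      split_ifs <;> norm_num
    rw [h1]
    have h3 := div_le_div_of_nonneg_right h2 (sq_nonneg (n : ℝ))
    have : ∀ u d : ℝ, (u + d / n) ^ 2 = u ^ 2 + d ^ 2 / n ^ 2 + d * (2 * u / n) := by
      intro u d; field_simp; ring
    simp only [this]
    linarith
  · simp only [mul_add, Finset.sum_add_distrib]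
    have : ∀ p q, wt a b A p * wt a b A q *
      ((ind A (x⁻¹ p) - ind A (x⁻¹ q)) * (ind A q - ind A p) * (2 * Ur A x / n)) =
      wt a b A p * wt a b A q *
      ((ind A (x⁻¹ p) - ind A (x⁻¹ q)) * (ind A q - ind A p)) * (2 * Ur A x / n) := by
      intro p q; ring
    simp only [this, ← Finset.sum_mul, sum_drift hab A hA]
    simp only [← Finset.mul_sum, ← Finset.sum_mul, sum_wt hab A hA]
    have h4 : Vr A x - n / 2 = n * Ur A x := by unfold Ur; field_simp
    rw [h4]
    push_cast
    apply le_of_eq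
    field_simp
    ring

lemma Ex_Usq {a b : ℝ} (hb : 0 < b) (hba : b ≤ a) (hab : a + b = 2) {n : ℕ} (hn : 2 ≤ n)
    (A : Finset (Fin (2 * n))) (hA : A.card = n) (r : ℝ) (hr : 1 - 2 * b / n ≤ r) (hr0 : 0 ≤ r)
    (t : ℕ) :
    Ex a b A t (fun y => Ur A y ^ 2) ≤ r ^ t + 1 / (2 * b * n) := by
  have hn' : (2 : ℝ) ≤ n := by exact_mod_cast hn
  have ha : 1 ≤ a := by linarith
  have hb1 : b ≤ 1 := by linarith
  have hab1 : a * b ≤ 1 := by nlinarith [sq_nonneg (a - b)]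
  induction t with
  | zero =>
    rw [Ex_zero]
    have hV : Vr A 1 = n := by
      simp [Vr, ind_sq, sum_ind A hA]
    have hU : Ur A 1 = 1 / 2 := by
      unfold Ur; rw [hV]; field_simp; ring
    rw [hU]
    have : 0 ≤ 1 / (2 * b * n) := by positivity
    norm_num; norm_num at this; linarith
  | succ t ih =>
    rw [Ex_succ]
    refine (Ex_mono (by linarith) hb.le A t (step_Usq (by linarith) hb.le hab (by omega)
      A hA)).trans ?_
    rw [Ex_add, Ex_smul, Ex_const hab (by omega) A hA]
    have h0 : 0 ≤ 1 - 2 * a * b / n := by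
      rw [sub_nonneg, div_le_one (by linarith)]
      nlinarith
    have h1 : 1 - 2 * a * b / n ≤ r := by
      refine le_trans ?_ hr
      gcongr
      nlinarith
    have h2 : (1 - 2 * a * b / n) * (1 / (2 * b * n)) + 1 / n ^ 2 ≤ 1 / (2 * b * n) := by
      have : (1 - 2 * a * b / n) * (1 / (2 * b * n)) + 1 / n ^ 2 =
        1 / (2 * b * n) - (a - 1) / n ^ 2 := by
        field_simp; ring
      rw [this]
      have : 0 ≤ (a - 1) / (n : ℝ) ^ 2 := div_nonneg (by linarith) (by positivity)
      linarith
    calc _ ≤ (1 - 2 * a * b / n) * (r ^ t + 1 / (2 * b * n)) + 1 / n ^ 2 := by gcongr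
      _ ≤ r * r ^ t + 1 / (2 * b * n) := by
        have := mul_le_mul_of_nonneg_right h1 (pow_nonneg hr0 t)
        linarith
      _ = _ := by ring

/-- number of fixed points in `B` -/
def Xc {N : ℕ} (A : Finset (Fin N)) (x : Equiv.Perm (Fin N)) : ℕ :=
  (Finset.univ.filter (fun i => i ∉ A ∧ x i = i)).card

/-- indicator of fixed point in `B` -/
def fi {N : ℕ} (A : Finset (Fin N)) (x : Equiv.Perm (Fin N)) (p : Fin N) : ℕ :=
  if p ∉ A ∧ x p = p then 1 else 0

/-- indicator of a gain -/
def gi {N : ℕ} (A : Finset (Fin N)) (x : Equiv.Perm (Fin N)) (p q : Fin N) : ℕ :=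
  if q ∉ A ∧ x q = p ∧ p ≠ q then 1 else 0

lemma Xc_eq {N : ℕ} (A : Finset (Fin N)) (x : Equiv.Perm (Fin N)) :
    Xc A x = ∑ i, fi A x i := by
  simp [Xc, fi]

lemma Xc_step {N : ℕ} (A : Finset (Fin N)) (x : Equiv.Perm (Fin N)) (p q : Fin N) :
    Xc A x + (gi A x p q + gi A x q p) ≤
      Xc A (Equiv.swap p q * x) + (fi A x p + fi A x q) := by
  have h1 : ∀ (c : ℕ) (p : Fin N), c = ∑ i, if i = p then c else 0 := by
    intro c p; simp
  rw [Xc_eq, Xc_eq, h1 (gi A x p q) q, h1 (gi A x q p) p, h1 (fi A x p) p, h1 (fi A x q) q]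
  simp only [← Finset.sum_add_distrib]
  refine Finset.sum_le_sum fun i _ => ?_
  simp only [fi, gi, Equiv.Perm.mul_apply, Equiv.swap_apply_def]
  grind

lemma fi_cases {N : ℕ} (A : Finset (Fin N)) (x : Equiv.Perm (Fin N)) (p : Fin N) :
    fi A x p = 0 ∨ fi A x p = 1 := by
  unfold fi; split_ifs <;> simp

lemma gi_cases {N : ℕ} (A : Finset (Fin N)) (x : Equiv.Perm (Fin N)) (p q : Fin N) :
    gi A x p q = 0 ∨ gi A x p q = 1 := by
  unfold gi; split_ifs <;> simp

lemma theta_step {N : ℕ} (A : Finset (Fin N)) (x : Equiv.Perm (Fin N)) (p q : Fin N)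
    {δ ρ : ℝ} (hδ : 0 ≤ δ) (hδ1 : δ < 1) (hρ : ρ ≤ 1 - δ / 2) :
    (1 - δ) ^ Xc A (Equiv.swap p q * x) ≤
      (1 - δ) ^ Xc A x * ((1 + δ / (1 - δ) * fi A x p) * (1 + δ / (1 - δ) * fi A x q)
        - δ * ρ * (gi A x p q + gi A x q p)) := by
  have hθ : 0 < 1 - δ := by linarith
  have hle := Xc_step A x p q
  have h1 : (1 - δ) ^ (Xc A (Equiv.swap p q * x) + (fi A x p + fi A x q)) ≤
      (1 - δ) ^ (Xc A x + (gi A x p q + gi A x q p)) :=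
    pow_le_pow_of_le_one hθ.le (by linarith) hle
  rw [pow_add, pow_add _ (Xc A x)] at h1
  have hL : ∀ k : ℕ, k = 0 ∨ k = 1 → (1 - δ) ^ k * (1 + δ / (1 - δ) * k) = 1 := by
    rintro k (rfl | rfl)
    · simp
    · field_simp; simp
  have hL2 : (1 - δ) ^ (fi A x p + fi A x q) *
      ((1 + δ / (1 - δ) * fi A x p) * (1 + δ / (1 - δ) * fi A x q)) = 1 := by
    rw [pow_add]
    have e1 := hL _ (fi_cases A x p)
    have e2 := hL _ (fi_cases A x q)
    calc _ = ((1 - δ) ^ fi A x p * (1 + δ / (1 - δ) * fi A x p)) *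
        ((1 - δ) ^ fi A x q * (1 + δ / (1 - δ) * fi A x q)) := by ring
      _ = 1 := by rw [e1, e2]; ring
  have hG : (1 - δ) ^ (gi A x p q + gi A x q p) ≤ 1 - δ * ρ * (gi A x p q + gi A x q p) := by
    rcases gi_cases A x p q with h | h <;> rcases gi_cases A x q p with h' | h' <;>
      rw [h, h'] <;> norm_num <;> nlinarith
  set L := (1 + δ / (1 - δ) * fi A x p) * (1 + δ / (1 - δ) * fi A x q) with hLdef
  have hs : 0 ≤ δ / (1 - δ) := by positivity
  have hL1 : 1 ≤ L := by
    have e1 : 0 ≤ δ / (1 - δ) * fi A x p := by positivity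
    have e2 : 0 ≤ δ / (1 - δ) * fi A x q := by positivity
    nlinarith
  have hX : 0 < (1 - δ) ^ Xc A x := by positivity
  have hg1 : (1 - δ) ^ (gi A x p q + gi A x q p) ≤ 1 := pow_le_one₀ hθ.le (by linarith)
  set g := (1 - δ) ^ (gi A x p q + gi A x q p) with hg
  calc (1 - δ) ^ Xc A (Equiv.swap p q * x)
      = (1 - δ) ^ Xc A (Equiv.swap p q * x) * (1 - δ) ^ (fi A x p + fi A x q) * L := by
        rw [mul_assoc, hL2, mul_one]
    _ ≤ (1 - δ) ^ Xc A x * g * L := by gcongr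
    _ = (1 - δ) ^ Xc A x * (g * L) := by ring
    _ ≤ _ := by
      apply mul_le_mul_of_nonneg_left _ hX.le
      nlinarith

lemma sum_wt_fi (a b : ℝ) {N : ℕ} (A : Finset (Fin N)) (x : Equiv.Perm (Fin N)) :
    ∑ p, wt a b A p * fi A x p = b * Xc A x := by
  rw [Xc_eq]
  push_cast
  rw [Finset.mul_sum]
  refine Finset.sum_congr rfl fun p _ => ?_
  unfold fi wt
  by_cases hp : p ∈ A <;> simp [hp]

lemma sum_wt_gi (a b : ℝ) {n : ℕ} (A : Finset (Fin (2 * n))) (hA : A.card = n)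
    (x : Equiv.Perm (Fin (2 * n))) :
    ∑ p, ∑ q, wt a b A p * wt a b A q * gi A x p q =
      b * (a * n + (b - a) * Vr A x) - b ^ 2 * Xc A x := by
  rw [Finset.sum_comm]
  have h : ∀ q p, wt a b A p * wt a b A q * gi A x p q =
      if p = x q then b * (wt a b A (x q) * ind A q) - b * (wt a b A q * fi A x q) else 0 := by
    intro q p
    by_cases hp : p = x q
    · subst hp
      simp only [gi, fi, wt, ind]
      by_cases h1 : q ∈ A
      · simp [h1]
      · by_cases h2 : x q = q
        · simp [h1, h2]
        · simp [h1, h2]; ring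
    · have : ¬ x q = p := fun h => hp h.symm
      simp [gi, hp, this]
  simp only [h, Finset.sum_ite_eq', Finset.mem_univ, if_true, Finset.sum_sub_distrib,
    ← Finset.mul_sum, sum_wt_fi]
  rw [← sum_perm x (wt a b A) (ind A), sum_wt_inv a b A hA]
  ring

lemma step_theta {a b : ℝ} (ha : 0 ≤ a) (hb : 0 ≤ b) (hab : a + b = 2) {n : ℕ} (hn : 0 < n)
    (A : Finset (Fin (2 * n))) (hA : A.card = n) (x : Equiv.Perm (Fin (2 * n)))
    {δ ρ : ℝ} (hδ : 0 ≤ δ) (hδ1 : δ < 1) (hρ : ρ ≤ 1 - δ / 2) :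
    stepOp a b A (fun y => (1 - δ) ^ Xc A y) x ≤
      (1 - δ) ^ Xc A x * ((1 + δ / (1 - δ) * b / (2 * n) * Xc A x) ^ 2
        + 2 * δ * ρ * b ^ 2 * Xc A x / (2 * n) ^ 2
        - ρ * b / (2 * n) * δ + ρ * b / (2 * n) * δ * (a - b) * Ur A x) := by
  have hn' : (0 : ℝ) < n := by exact_mod_cast hn
  refine (stepOp_le ha hb A _ x _ fun p q => theta_step A x p q hδ hδ1 hρ).trans ?_
  have h : ∀ p q, wt a b A p * wt a b A q * ((1 - δ) ^ Xc A x *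
      ((1 + δ / (1 - δ) * fi A x p) * (1 + δ / (1 - δ) * fi A x q)
        - δ * ρ * (gi A x p q + gi A x q p))) =
      (1 - δ) ^ Xc A x * ((wt a b A p + δ / (1 - δ) * (wt a b A p * fi A x p)) *
        (wt a b A q + δ / (1 - δ) * (wt a b A q * fi A x q)) -
        δ * ρ * (wt a b A p * wt a b A q * gi A x p q) -
        δ * ρ * (wt a b A q * wt a b A p * gi A x q p)) := by
    intro p q; ring
  have h2 : ∑ p, ∑ q, wt a b A q * wt a b A p * gi A x q p =
      b * (a * n + (b - a) * Vr A x) - b ^ 2 * Xc A x := by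
    rw [Finset.sum_comm]; exact sum_wt_gi a b A hA x
  have h4 : Vr A x = n * Ur A x + n / 2 := by unfold Ur; field_simp; ring
  simp only [h, ← Finset.mul_sum, Finset.sum_sub_distrib, ← Finset.sum_mul, h2,
    sum_wt_gi a b A hA, Finset.sum_add_distrib, sum_wt hab A hA, sum_wt_fi]
  rw [mul_div_assoc]
  apply le_of_eq
  congr 1
  rw [h4]
  have ha' : a = 2 - b := by linarith
  subst ha'
  set s := δ / (1 - δ)
  push_cast
  field_simp
  ring

set_option maxHeartbeats 800000 in
lemma one_step_num {b δ ρ D N : ℝ} (X : ℕ) (hb : 0 < b) (hb1 : b ≤ 1) (hδ : 0 ≤ δ) (hδD : δ ≤ D)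
    (hD : D < 1) (hρ0 : 0 ≤ ρ) (hρ1 : ρ ≤ 1) (hN : 2 ≤ N) :
    (1 - δ) ^ X * ((1 + δ / (1 - δ) * b / N * X) ^ 2 + 2 * δ * ρ * b ^ 2 * X / N ^ 2
      - ρ * b / N * δ) ≤
    (1 - (1 - 2 * b / N - (8 + 25 / (1 - D)) / N ^ 2) * δ) ^ X * (1 - ρ * b / N * δ) := by
  have hN0 : 0 < N := by linarith
  have hθ : 0 < 1 - δ := by linarith
  have hθ0 : 0 < 1 - D := by linarith
  obtain ⟨m, hm⟩ : ∃ m, m = ρ * b / N * δ := ⟨_, rfl⟩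
  obtain ⟨z, hz⟩ : ∃ z, z = δ / (1 - δ) * b / N := ⟨_, rfl⟩
  obtain ⟨v, hv⟩ : ∃ v, v = 2 * δ * ρ * b ^ 2 / N ^ 2 := ⟨_, rfl⟩
  obtain ⟨y, hy⟩ : ∃ y, y = 1 + 2 / N := ⟨_, rfl⟩
  obtain ⟨zz, hzz⟩ : ∃ zz, zz = z * y + v * y / 2 := ⟨_, rfl⟩
  have hm0 : 0 ≤ m := by rw [hm]; positivity
  have hρb : ρ * b ≤ 1 := by nlinarith
  have hmN : m ≤ 1 / N := by
    rw [hm, div_mul_eq_mul_div]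
    gcongr
    nlinarith [mul_nonneg hρ0 hb.le]
  have hN2 : 1 / N ≤ 1 / 2 := by gcongr
  have hm2 : m ≤ 1 / 2 := by linarith
  have hz0 : 0 ≤ z := by rw [hz]; positivity
  have hv0 : 0 ≤ v := by rw [hv]; positivity
  have hy1 : 1 ≤ y := by rw [hy]; have : 0 ≤ 2 / N := by positivity
                         linarith
  have hy2 : y ≤ 2 := by rw [hy]; have : 2 / N = 2 * (1 / N) := by ring
                         linarith
  have hmy : 1 + 2 * m ≤ y := by
    rw [hy]; have : 2 / N = 2 * (1 / N) := by ring
    linarith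
  have hzz0 : 0 ≤ zz := by rw [hzz]; positivity
  have hX0 : (0 : ℝ) ≤ X := by positivity
  have hv2 : v ≤ 2 * δ / N ^ 2 := by
    rw [hv]
    apply div_le_div_of_nonneg_right _ (sq_nonneg N)
    have h1 : ρ * b ^ 2 ≤ 1 := by
      have : b ^ 2 ≤ 1 := pow_le_one₀ hb.le hb1
      exact mul_le_one₀ hρ1 (sq_nonneg b) this
    have h2 := mul_le_mul_of_nonneg_left h1 (show 0 ≤ 2 * δ by linarith)
    linarith
  -- main factor
  have hQ : (1 + z * X) ^ 2 + v * X - m ≤ (1 - m) * (1 + zz) ^ (2 * X) := by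
    have e1 : (1 + z * X) ^ 2 + v * X - m ≤
        (1 - m) * (1 + ((1 + z * X) ^ 2 + v * X - 1) * y) := by
      have hq : 0 ≤ (1 + z * X) ^ 2 + v * X - 1 := by
        have : 0 ≤ z * X := by positivity
        have : 0 ≤ v * X := by positivity
        nlinarith
      have hk : 1 ≤ (1 - m) * y := by nlinarith
      nlinarith
    have e2 : 1 + ((1 + z * X) ^ 2 + v * X - 1) * y ≤ (1 + X * zz) ^ 2 := by
      have i1 : (z * X) ^ 2 * y ≤ (X * zz) ^ 2 := by
        have : z * y ≤ zz := by rw [hzz]; have : 0 ≤ v * y / 2 := by positivity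
                                linarith
        calc (z * X) ^ 2 * y ≤ (z * X) ^ 2 * y ^ 2 := by
              gcongr
              exact le_self_pow₀ hy1 (by norm_num)
          _ = (X * (z * y)) ^ 2 := by ring
          _ ≤ _ := by gcongr
      have i2 : 2 * (X * zz) = 2 * (z * X) * y + v * X * y := by rw [hzz]; ring
      nlinarith
    have e3 : (1 + X * zz) ^ 2 ≤ (1 + zz) ^ (2 * X) := by
      rw [mul_comm 2 X, pow_mul]
      have := one_add_mul_le_pow (show -2 ≤ zz by linarith) X
      gcongr
    calc _ ≤ _ := e1
      _ ≤ _ := mul_le_mul_of_nonneg_left (e2.trans e3) (by linarith)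
  have hfin : (1 - δ) * (1 + zz) ^ 2 ≤
      1 - (1 - 2 * b / N - (8 + 25 / (1 - D)) / N ^ 2) * δ := by
    have j0 : (1 - δ) * z = δ * b / N := by rw [hz]; field_simp
    have j1 : (1 - δ) * zz ≤ δ * (b / N + 4 / N ^ 2) := by
      have k1 : (1 - δ) * zz = δ * b / N * y + (1 - δ) * (v * y / 2) := by
        rw [hzz, ← j0]; ring
      have k2 : (1 - δ) * (v * y / 2) ≤ 2 * δ / N ^ 2 := by
        have l1 : v * y / 2 ≤ v := by
          have := mul_le_mul_of_nonneg_left hy2 hv0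
          linarith
        have l2 : 0 ≤ v * y / 2 := by positivity
        have l3 : 0 ≤ δ * (v * y / 2) := mul_nonneg hδ l2
        linarith
      have k3 : δ * b / N * y ≤ δ * b / N + 2 * δ / N ^ 2 := by
        have : δ * b / N * y = δ * b / N + 2 * (δ * b) / N ^ 2 := by
          rw [hy]; field_simp
        rw [this]
        gcongr
        exact mul_le_of_le_one_right hδ hb1
      calc _ ≤ δ * b / N + 2 * δ / N ^ 2 + 2 * δ / N ^ 2 := by linarith
        _ = _ := by ring
    have j2 : (1 - δ) * zz ≤ δ * (5 / N) := by
      refine j1.trans (mul_le_mul_of_nonneg_left ?_ hδ)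
      have : 4 / N ^ 2 ≤ 4 / N := by
        gcongr
        exact le_self_pow₀ (by linarith) (by norm_num)
      have : b / N ≤ 1 / N := by gcongr
      have : 5 / N = 1 / N + 4 / N := by ring
      linarith
    have j3 : zz ≤ 5 / N / (1 - D) := by
      rw [le_div_iff₀ hθ0]
      have : 0 ≤ 5 / N := by positivity
      have k1 : zz * (1 - D) ≤ zz * (1 - δ) := mul_le_mul_of_nonneg_left (by linarith) hzz0
      have k2 : δ * (5 / N) ≤ 5 / N := mul_le_of_le_one_left this (by linarith)
      linarith
    have j4 : (1 - δ) * zz * zz ≤ δ * (5 / N) * (5 / N / (1 - D)) := by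
      apply mul_le_mul j2 j3 hzz0
      positivity
    have j5 : δ * (5 / N) * (5 / N / (1 - D)) = 25 / (1 - D) / N ^ 2 * δ := by
      field_simp; ring
    have j6 : 1 - (1 - 2 * b / N - (8 + 25 / (1 - D)) / N ^ 2) * δ = 
      1 - δ + 2 * (δ * (b / N + 4 / N ^ 2)) + 25 / (1 - D) / N ^ 2 * δ := by ring
    rw [j6, ← j5]
    have j7 : (1 - δ) * (1 + zz) ^ 2 = 1 - δ + 2 * ((1 - δ) * zz) + (1 - δ) * zz * zz := by ring
    rw [j7]
    linarith
  have heq : (1 + δ / (1 - δ) * b / N * X) ^ 2 + 2 * δ * ρ * b ^ 2 * X / N ^ 2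
      - ρ * b / N * δ = (1 + z * X) ^ 2 + v * X - m := by
    rw [hz, hv, hm]; ring
  rw [heq, ← hm]
  calc _ ≤ (1 - δ) ^ X * ((1 - m) * (1 + zz) ^ (2 * X)) := by gcongr
    _ = ((1 - δ) * (1 + zz) ^ 2) ^ X * (1 - m) := by
      rw [mul_pow, ← pow_mul]; ring
    _ ≤ _ := by
      have : 0 ≤ 1 - m := by linarith
      gcongr

lemma Xc_one {n : ℕ} (A : Finset (Fin (2 * n))) (hA : A.card = n) : Xc A 1 = n := by
  have : Finset.univ.filter (fun i => i ∉ A ∧ (1 : Equiv.Perm (Fin (2 * n))) i = i) = Aᶜ := by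
    ext i; simp
  rw [Xc, this, Finset.card_compl, hA, Fintype.card_fin]
  omega

lemma Ex_theta {a b : ℝ} (hb : 0 < b) (hba : b ≤ a) (hab : a + b = 2) {n : ℕ} (hn : 2 ≤ n)
    (A : Finset (Fin (2 * n))) (hA : A.card = n) {D r g ε : ℝ} (hD : D < 1) (hε : 0 < ε)
    (hr : r = 1 - 2 * b / (2 * n) - (8 + 25 / (1 - D)) / (2 * n) ^ 2)
    (hr1 : 1 / 2 ≤ r) (hr2 : 1 - 2 * b / n ≤ r) (hg : g = (1 - D / 2) * b / (2 * n)) (t : ℕ) :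
    ∀ δ, 0 ≤ δ → δ ≤ D → Ex a b A t (fun y => (1 - δ) ^ Xc A y) ≤
      Real.exp (-(n * δ * r ^ t) - g * δ * ∑ i ∈ Finset.range t, r ^ i) +
      2 * g * δ * ((ε + 1 / (8 * b * n * ε)) * ∑ i ∈ Finset.range t, r ^ i
        + t * r ^ t / (2 * ε)) := by
  have hn' : (2 : ℝ) ≤ n := by exact_mod_cast hn
  have ha : 0 ≤ a := by linarith
  have hb1 : b ≤ 1 := by linarith
  have hD0 : 0 < 1 - D := by linarith
  have hr3 : r ≤ 1 := by
    rw [hr]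
    have h1 : 0 ≤ 2 * b / (2 * n) := by positivity
    have h2 : 0 ≤ (8 + 25 / (1 - D)) / (2 * (n : ℝ)) ^ 2 := by positivity
    linarith
  induction t with
  | zero =>
    intro δ h0 h1
    rw [Ex_zero, Xc_one A hA]
    simp only [pow_zero, Finset.range_zero, Finset.sum_empty, mul_zero, sub_zero, mul_one,
      Nat.cast_zero, zero_div, add_zero]
    have : (1 - δ) ≤ Real.exp (-δ) := by
      have := Real.add_one_le_exp (-δ); linarith
    calc (1 - δ) ^ n ≤ (Real.exp (-δ)) ^ n := pow_le_pow_left₀ (by linarith) this n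
      _ = Real.exp (-(n * δ)) := by rw [← Real.exp_nat_mul]; congr 1; ring
  | succ t ih =>
    intro δ h0 h1
    have hg0 : 0 ≤ g := by rw [hg]; have : 0 ≤ 1 - D / 2 := by linarith
                           positivity
    have hgd : 0 ≤ g * δ := mul_nonneg hg0 h0
    have hD0' : 0 ≤ D := h0.trans h1
    have hg1 : g * δ ≤ 1 := by
      have : g ≤ 1 := by
        rw [hg, div_le_one (by linarith)]
        nlinarith
      nlinarith
    rw [Ex_succ]
    have hpt : ∀ x, stepOp a b A (fun y => (1 - δ) ^ Xc A y) x ≤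
        (1 - g * δ) * (1 - r * δ) ^ Xc A x +
          (2 * g * δ * ε + 2 * g * δ / (4 * ε) * Ur A x ^ 2) := by
      intro x
      refine (step_theta (ρ := 1 - D / 2) ha hb.le hab (by omega) A hA x h0 (by linarith)
        (by linarith)).trans ?_
      have e1 := one_step_num (ρ := 1 - D / 2) (N := 2 * n) (Xc A x) hb hb1 h0 h1 hD
        (by linarith) (by linarith) (by linarith)
      rw [← hr, ← hg] at e1
      rw [← hg, mul_add]
      have e2 : (1 - δ) ^ Xc A x * (g * δ * (a - b) * Ur A x) ≤
          2 * g * δ * ε + 2 * g * δ / (4 * ε) * Ur A x ^ 2 := by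
        have f1 : Ur A x ≤ ε + Ur A x ^ 2 / (4 * ε) := by
          have : ε + Ur A x ^ 2 / (4 * ε) - Ur A x = (2 * ε - Ur A x) ^ 2 / (4 * ε) := by
            field_simp; ring
          have : 0 ≤ (2 * ε - Ur A x) ^ 2 / (4 * ε) := by positivity
          linarith
        have f0 : 0 ≤ ε + Ur A x ^ 2 / (4 * ε) := by positivity
        have f2 : (1 - δ) ^ Xc A x ≤ 1 := pow_le_one₀ (by linarith) (by linarith)
        have f3 : 0 ≤ (1 - δ) ^ Xc A x := pow_nonneg (by linarith) _
        have f4 : (1 - δ) ^ Xc A x * (a - b) ≤ 2 := by nlinarith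
        have f5 : 0 ≤ (1 - δ) ^ Xc A x * (a - b) := mul_nonneg f3 (by linarith)
        calc _ = g * δ * ((1 - δ) ^ Xc A x * (a - b) * Ur A x) := by ring
          _ ≤ g * δ * (2 * (ε + Ur A x ^ 2 / (4 * ε))) := by
            apply mul_le_mul_of_nonneg_left _ hgd
            exact (mul_le_mul_of_nonneg_left f1 f5).trans (mul_le_mul_of_nonneg_right f4 f0)
          _ = _ := by ring
      linarith
    refine (Ex_mono ha hb.le A t hpt).trans ?_
    rw [Ex_add, Ex_smul, Ex_add, Ex_smul a b A t (2 * g * δ / (4 * ε)),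
      Ex_const hab (by omega) A hA]
    have hU := Ex_Usq hb hba hab hn A hA r hr2 (by linarith) t
    have hI := ih (r * δ) (by positivity) (by nlinarith)
    rw [geom_sum_succ]
    set G := ∑ i ∈ Finset.range t, r ^ i
    have hG : 0 ≤ G := Finset.sum_nonneg fun i _ => by positivity
    set EX := Ex a b A t (fun y => (1 - r * δ) ^ Xc A y)
    set EU := Ex a b A t (fun y => Ur A y ^ 2)
    set H := (ε + 1 / (8 * b * n * ε)) * G + t * r ^ t / (2 * ε) with hH
    have hH0 : 0 ≤ H := by positivity
    have s1 : (1 - g * δ) * EX ≤ Real.exp (-(n * δ * r ^ (t + 1)) - g * δ * (r * G + 1)) +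
        2 * g * (r * δ) * H := by
      have k1 : (1 - g * δ) ≤ Real.exp (-(g * δ)) := by
        have := Real.add_one_le_exp (-(g * δ)); linarith
      have k2 : 0 ≤ 2 * g * (r * δ) * H := by positivity
      calc (1 - g * δ) * EX ≤ (1 - g * δ) * (Real.exp (-(n * (r * δ) * r ^ t) -
            g * (r * δ) * G) + 2 * g * (r * δ) * H) :=
          mul_le_mul_of_nonneg_left hI (by linarith)
        _ ≤ (1 - g * δ) * Real.exp (-(n * (r * δ) * r ^ t) -
            g * (r * δ) * G) + 2 * g * (r * δ) * H := by
          rw [mul_add]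
          have := mul_le_of_le_one_left k2 (show 1 - g * δ ≤ 1 by linarith)
          linarith
        _ ≤ Real.exp (-(g * δ)) * Real.exp (-(n * (r * δ) * r ^ t) -
            g * (r * δ) * G) + 2 * g * (r * δ) * H := by gcongr
        _ = _ := by
          rw [← Real.exp_add]; congr 2; ring
    have s2 : 2 * g * δ / (4 * ε) * EU ≤ 2 * g * δ / (4 * ε) * (r ^ t + 1 / (2 * b * n)) := by
      gcongr
    have s3 : 2 * g * (r * δ) * H + (2 * g * δ * ε +
        2 * g * δ / (4 * ε) * (r ^ t + 1 / (2 * b * n))) ≤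
        2 * g * δ * ((ε + 1 / (8 * b * n * ε)) * (r * G + 1)
        + (t + 1 : ℕ) * r ^ (t + 1) / (2 * ε)) := by
      have k3 : r ^ t / (4 * ε) ≤ r ^ (t + 1) / (2 * ε) := by
        rw [div_le_div_iff₀ (by positivity) (by positivity), pow_succ]
        have : 0 ≤ r ^ t := by positivity
        nlinarith [mul_nonneg (mul_nonneg this hε.le) (show 0 ≤ r - 1 / 2 by linarith)]
      calc _ = 2 * g * δ * ((ε + 1 / (8 * b * n * ε)) * (r * G + 1)
          + (t * r ^ (t + 1) / (2 * ε) + r ^ t / (4 * ε))) := by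
            rw [hH]; field_simp; ring
        _ ≤ 2 * g * δ * ((ε + 1 / (8 * b * n * ε)) * (r * G + 1)
          + (t * r ^ (t + 1) / (2 * ε) + r ^ (t + 1) / (2 * ε))) := by
            gcongr
        _ = _ := by push_cast; ring
    linarith

lemma dTV_lower {α : Type*} [Fintype α] (p q f : α → ℝ) (k : ℝ) (hk : 0 < k)
    (hf : ∀ x, 0 < f x) (hp : ∀ x, 0 ≤ p x) (hq : ∀ x, 0 ≤ q x) (hp1 : ∑ x, p x = 1)
    (hq1 : ∑ x, q x = 1) :
    1 - (k * ∑ x, p x * f x + (∑ x, q x * (f x)⁻¹) / k) / 2 ≤ dTV p q := by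
  have h : ∀ x, (p x + q x) - (k * (p x * f x) + q x * (f x)⁻¹ / k) ≤ |p x - q x| := by
    intro x
    set y := k * f x with hy
    have hy0 : 0 < y := mul_pos hk (hf x)
    have e : q x * (f x)⁻¹ / k = q x * y⁻¹ := by
      rw [hy, mul_inv]; ring
    have e2 : k * (p x * f x) = p x * y := by rw [hy]; ring
    rw [e, e2]
    have hyy : 2 ≤ y + y⁻¹ := by
      have : y + y⁻¹ - 2 = (y - 1) ^ 2 / y := by field_simp; ring
      have : 0 ≤ (y - 1) ^ 2 / y := by positivity
      linarith
    have hyi : 0 < y⁻¹ := by positivity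
    rcases le_total (p x) (q x) with hh | hh
    · have : q x - p x ≤ |p x - q x| := by rw [abs_sub_comm]; exact le_abs_self _
      nlinarith [hp x, mul_le_mul_of_nonneg_right hh hyi.le]
    · have : p x - q x ≤ |p x - q x| := le_abs_self _
      nlinarith [hq x, mul_le_mul_of_nonneg_right hh hy0.le]
  have hs := Finset.sum_le_sum fun x (_ : x ∈ Finset.univ) => h x
  simp only [Finset.sum_sub_distrib, Finset.sum_add_distrib, ← Finset.mul_sum,
    ← Finset.sum_div, hp1, hq1] at hs
  unfold dTV
  linarith

lemma card_fix {N : ℕ} (S : Finset (Fin N)) :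
    (Finset.univ.filter (fun σ : Equiv.Perm (Fin N) => ∀ i ∈ S, σ i = i)).card =
      (N - S.card).factorial := by
  classical
  have e := Equiv.Perm.subtypeEquivSubtypePerm (fun i : Fin N => i ∉ S)
  have h := Fintype.card_congr e
  rw [Fintype.card_perm] at h
  have h2 : Fintype.card {i : Fin N // i ∉ S} = N - S.card := by
    rw [Fintype.card_subtype_compl]; simp
  rw [h2] at h
  rw [h, Fintype.card_subtype]
  simp

lemma desc_le (n j : ℕ) : n.descFactorial j * 2 ^ j ≤ (2 * n).descFactorial j := by
  induction j with
  | zero => simp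
  | succ j ih =>
    rw [Nat.descFactorial_succ, Nat.descFactorial_succ, pow_succ]
    calc (n - j) * n.descFactorial j * (2 ^ j * 2) =
        (2 * (n - j)) * (n.descFactorial j * 2 ^ j) := by ring
      _ ≤ (2 * n - j) * (2 * n).descFactorial j := Nat.mul_le_mul (by omega) ih

lemma unif_bound {n : ℕ} (A : Finset (Fin (2 * n))) (hA : A.card = n) {s : ℝ} (hs : 0 ≤ s) :
    ∑ σ, unif (2 * n) σ * (1 + s) ^ Xc A σ ≤ Real.exp (s / 2) := by
  classical
  have hc : Aᶜ.card = n := by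
    rw [Finset.card_compl, hA, Fintype.card_fin]; omega
  have h1 : ∀ σ : Equiv.Perm (Fin (2 * n)), (1 + s) ^ Xc A σ =
      ∑ S ∈ Aᶜ.powerset, if ∀ i ∈ S, σ i = i then s ^ S.card else 0 := by
    intro σ
    have e : Finset.univ.filter (fun i => i ∉ A ∧ σ i = i) = Aᶜ.filter (fun i => σ i = i) := by
      ext i; simp
    rw [Xc, e, ← Finset.sum_filter]
    have e2 : Aᶜ.powerset.filter (fun S => ∀ i ∈ S, σ i = i) =
        (Aᶜ.filter (fun i => σ i = i)).powerset := by
      ext S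
      simp only [Finset.mem_filter, Finset.mem_powerset, Finset.subset_iff]
      grind
    rw [e2, add_comm]
    have := Finset.sum_pow_mul_eq_add_pow s 1 (Aᶜ.filter (fun i => σ i = i))
    rw [← this]
    simp
  simp only [h1, unif, ← Finset.mul_sum]
  rw [Finset.sum_comm]
  have h2 : ∀ S : Finset (Fin (2 * n)),
      (∑ σ : Equiv.Perm (Fin (2 * n)), if ∀ i ∈ S, σ i = i then s ^ S.card else 0) =
      (2 * n - S.card).factorial * s ^ S.card := by
    intro S
    rw [← Finset.sum_filter, Finset.sum_const, card_fix, nsmul_eq_mul]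
  simp only [h2]
  rw [Finset.sum_powerset_apply_card (fun j => ((2 * n - j).factorial : ℝ) * s ^ j), hc,
    Finset.mul_sum]
  refine le_trans (Finset.sum_le_sum (g := fun j => (s / 2) ^ j / j.factorial) ?_)
    (Real.sum_le_exp_of_nonneg (by positivity) _)
  intro j hj
  have hj' : j ≤ n := by simpa [Nat.lt_succ_iff] using hj
  have f1 : (n.choose j : ℝ) * j.factorial = n.descFactorial j := by
    rw [Nat.descFactorial_eq_factorial_mul_choose]; push_cast; ring
  have f2 : ((2 * n).factorial : ℝ) = (2 * n - j).factorial * (2 * n).descFactorial j := by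
    rw [← Nat.factorial_mul_descFactorial (show j ≤ 2 * n by omega)]; push_cast; ring
  have f3 : (n.descFactorial j : ℝ) * 2 ^ j ≤ (2 * n).descFactorial j := by
    exact_mod_cast desc_le n j
  rw [nsmul_eq_mul, div_pow, div_div, le_div_iff₀ (by positivity), inv_mul_eq_div,
    div_mul_eq_mul_div, div_le_iff₀ (by positivity), f2]
  have : (n.choose j : ℝ) * ((2 * n - j).factorial * s ^ j) * (2 ^ j * j.factorial) =
     (s ^ j * (2 * n - j).factorial) * ((n.choose j : ℝ) * j.factorial * 2 ^ j) := by ring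
  rw [this, f1]
  calc _ ≤ (s ^ j * (2 * n - j).factorial) * ((2 * n).descFactorial j : ℝ) := by gcongr
    _ = _ := by ring

open Filter Topology in
lemma log_sub_div_tendsto (c : ℝ) :
    Tendsto (fun N : ℝ => (Real.log N - c) / N) atTop (𝓝 0) := by
  have h1 : Tendsto (fun N : ℝ => Real.log N / N) atTop (𝓝 0) := by
    have := Real.isLittleO_log_id_atTop.tendsto_div_nhds_zero
    simpa using this
  have h2 : Tendsto (fun N : ℝ => c / N) atTop (𝓝 0) := tendsto_const_nhds.div_atTop tendsto_id
  simpa [sub_div] using h1.sub h2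

open Filter Topology in
lemma lim_core {b K : ℝ} (hb : 0 < b) (hK : 0 ≤ K) (c : ℝ) :
    Tendsto (fun N : ℝ => N * (1 - 2 * b / N - K / N ^ 2) ^ ⌊N / (2 * b) * (Real.log N - c)⌋₊)
      atTop (𝓝 (Real.exp c)) := by
  have hy : Tendsto (fun N : ℝ => 2 * b / N + K / N ^ 2) atTop (𝓝 0) := by
    have h1 : Tendsto (fun N : ℝ => 2 * b / N) atTop (𝓝 0) :=
      tendsto_const_nhds.div_atTop tendsto_id
    have h2 : Tendsto (fun N : ℝ => K / N ^ 2) atTop (𝓝 0) :=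
      tendsto_const_nhds.div_atTop (tendsto_pow_atTop (by norm_num))
    simpa using h1.add h2
  have hyev : ∀ᶠ N : ℝ in atTop, 2 * b / N + K / N ^ 2 < 1 :=
    hy.eventually_lt_const (by norm_num)
  have hlog : ∀ᶠ N : ℝ in atTop, c ≤ Real.log N := Real.tendsto_log_atTop.eventually_ge_atTop c
  have hup : Tendsto (fun N : ℝ => Real.exp (c + 2 * b / N)) atTop (𝓝 (Real.exp c)) := by
    apply (Real.continuous_exp.tendsto _).comp
    have h1 : Tendsto (fun N : ℝ => 2 * b / N) atTop (𝓝 0) :=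
      tendsto_const_nhds.div_atTop tendsto_id
    simpa using (tendsto_const_nhds (x := c)).add h1
  have hlow : Tendsto (fun N : ℝ => Real.exp (c - ((Real.log N - c) / N) *
      ((K / (2 * b) + 2 * b + K / N) / (1 - (2 * b / N + K / N ^ 2))))) atTop
      (𝓝 (Real.exp c)) := by
    apply (Real.continuous_exp.tendsto _).comp
    have h2 : Tendsto (fun N : ℝ => K / N) atTop (𝓝 0) :=
      tendsto_const_nhds.div_atTop tendsto_id
    have h3 : Tendsto (fun N : ℝ => (K / (2 * b) + 2 * b + K / N)) atTop
      (𝓝 (K / (2 * b) + 2 * b + 0)) := tendsto_const_nhds.add h2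
    have h4 : Tendsto (fun N : ℝ => 1 - (2 * b / N + K / N ^ 2)) atTop (𝓝 (1 - 0)) :=
      tendsto_const_nhds.sub hy
    have h5 := (tendsto_const_nhds (x := c)).sub
      ((log_sub_div_tendsto c).mul (h3.div h4 (by norm_num)))
    simpa using h5
  refine tendsto_of_tendsto_of_tendsto_of_le_of_le' hlow hup ?_ ?_
  · filter_upwards [hyev, hlog, eventually_gt_atTop 0] with N h1 h2 h0
    set y := 2 * b / N + K / N ^ 2 with hydef
    have hy0 : 0 ≤ y := by positivity
    have h1y : 0 < 1 - y := by linarith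
    have hr : 1 - 2 * b / N - K / N ^ 2 = 1 - y := by rw [hydef]; ring
    rw [hr]
    set T := ⌊N / (2 * b) * (Real.log N - c)⌋₊
    have hT : (T : ℝ) ≤ N / (2 * b) * (Real.log N - c) :=
      Nat.floor_le (mul_nonneg (by positivity) (by linarith))
    have e1 : Real.exp (-(y / (1 - y))) ≤ 1 - y := by
      rw [Real.exp_neg]
      have : (1 - y)⁻¹ ≤ Real.exp (y / (1 - y)) := by
        have := Real.add_one_le_exp (y / (1 - y))
        have e : y / (1 - y) + 1 = (1 - y)⁻¹ := by field_simp; ring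
        rwa [e] at this
      exact inv_le_of_inv_le₀ h1y this
    have e2 : Real.exp (-(T * (y / (1 - y)))) ≤ (1 - y) ^ T := by
      have := pow_le_pow_left₀ (Real.exp_pos _).le e1 T
      rw [← Real.exp_nat_mul] at this
      simpa using this
    have e3 : N = Real.exp (Real.log N) := (Real.exp_log h0).symm
    calc _ ≤ Real.exp (Real.log N) * Real.exp (-(T * (y / (1 - y)))) := by
          rw [← Real.exp_add]
          apply Real.exp_le_exp.mpr
          have hyy : 0 ≤ y / (1 - y) := by positivity
          have e4 := mul_le_mul_of_nonneg_right hT hyy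
          have e5 : (Real.log N - c) / N * ((K / (2 * b) + 2 * b + K / N) / (1 - y)) =
              N / (2 * b) * (Real.log N - c) * (y / (1 - y)) - (Real.log N - c) := by
            have : (K / (2 * b) + 2 * b + K / N) / N = N / (2 * b) * y - (1 - y) := by
              rw [hydef]; field_simp; ring
            calc _ = (Real.log N - c) * (((K / (2 * b) + 2 * b + K / N) / N) / (1 - y)) := by
                  ring
              _ = _ := by rw [this]; field_simp
          rw [e5]
          linarith
      _ ≤ _ := by rw [← e3]; gcongr
  · filter_upwards [hyev, hlog, eventually_gt_atTop 0] with N h1 h2 h0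
    set T := ⌊N / (2 * b) * (Real.log N - c)⌋₊
    have hT : N / (2 * b) * (Real.log N - c) < T + 1 := Nat.lt_floor_add_one _
    have e1 : 1 - 2 * b / N - K / N ^ 2 ≤ Real.exp (-(2 * b / N)) := by
      have := Real.add_one_le_exp (-(2 * b / N))
      have : 0 ≤ K / N ^ 2 := by positivity
      linarith
    have e2 : (1 - 2 * b / N - K / N ^ 2) ^ T ≤ Real.exp (-(T * (2 * b / N))) := by
      have := pow_le_pow_left₀ (by linarith) e1 T
      rw [← Real.exp_nat_mul] at this
      simpa using this
    have e3 : N = Real.exp (Real.log N) := (Real.exp_log h0).symm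
    calc _ ≤ Real.exp (Real.log N) * Real.exp (-(T * (2 * b / N))) := by
          rw [← e3]; gcongr
      _ ≤ _ := by
        rw [← Real.exp_add]
        apply Real.exp_le_exp.mpr
        have hbN : 0 < 2 * b / N := by positivity
        have e4 := mul_le_mul_of_nonneg_right hT.le hbN.le
        have e5 : N / (2 * b) * (Real.log N - c) * (2 * b / N) = Real.log N - c := by
          field_simp
        rw [e5] at e4
        linarith

open Filter Topology in
lemma lim_bound {b c D ε K : ℝ} (hb : 0 < b) (hK : 0 ≤ K) (hε : 0 < ε) :
    Tendsto (fun N : ℝ =>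
      Real.exp (-(N / 2 * D * (1 - 2 * b / N - K / N ^ 2) ^ ⌊N / (2 * b) * (Real.log N - c)⌋₊) -
        (1 - D / 2) * b / N * D * ∑ i ∈ Finset.range ⌊N / (2 * b) * (Real.log N - c)⌋₊,
          (1 - 2 * b / N - K / N ^ 2) ^ i) +
      2 * ((1 - D / 2) * b / N) * D * ((ε + 1 / (8 * b * (N / 2) * ε)) *
        ∑ i ∈ Finset.range ⌊N / (2 * b) * (Real.log N - c)⌋₊, (1 - 2 * b / N - K / N ^ 2) ^ i
        + ⌊N / (2 * b) * (Real.log N - c)⌋₊ *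
          (1 - 2 * b / N - K / N ^ 2) ^ ⌊N / (2 * b) * (Real.log N - c)⌋₊ / (2 * ε)))
      atTop (𝓝 (Real.exp (-(D * (Real.exp c / 2)) - D * ((1 - D / 2) / 2)) +
        D * (1 - D / 2) * ε)) := by
  have hcore := lim_core hb hK c
  have hinv : ∀ k : ℝ, Tendsto (fun N : ℝ => k / N) atTop (𝓝 0) := fun k =>
      tendsto_const_nhds.div_atTop tendsto_id
  set R : ℝ → ℝ := fun N => (1 - 2 * b / N - K / N ^ 2) ^ ⌊N / (2 * b) * (Real.log N - c)⌋₊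
    with hR
  set G : ℝ → ℝ := fun N => ∑ i ∈ Finset.range ⌊N / (2 * b) * (Real.log N - c)⌋₊,
          (1 - 2 * b / N - K / N ^ 2) ^ i with hG
  have hNR : Tendsto (fun N => N * R N) atTop (𝓝 (Real.exp c)) := hcore
  have hR0 : Tendsto R atTop (𝓝 0) := by
    have h := hNR.mul (hinv 1)
    rw [mul_zero] at h
    refine h.congr' ?_
    filter_upwards [eventually_gt_atTop 0] with N hN
    field_simp
  have hTR : Tendsto (fun N : ℝ => (⌊N / (2 * b) * (Real.log N - c)⌋₊ : ℝ) * R N / N) atTop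
      (𝓝 0) := by
    have h := ((log_sub_div_tendsto c).mul hNR).div_const (2 * b)
    simp only [zero_mul, zero_div] at h
    have hpos : ∀ᶠ N in atTop, 0 < N * R N :=
      hNR.eventually_const_lt (Real.exp_pos c)
    refine tendsto_of_tendsto_of_tendsto_of_le_of_le' tendsto_const_nhds h ?_ ?_
    · filter_upwards [eventually_gt_atTop 0, hpos] with N h0 hp
      have : 0 < R N := pos_of_mul_pos_right hp h0.le
      positivity
    · filter_upwards [eventually_gt_atTop 0, hpos,
        Real.tendsto_log_atTop.eventually_ge_atTop c] with N h0 hp hl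
      have hRp : 0 < R N := pos_of_mul_pos_right hp h0.le
      have hT : (⌊N / (2 * b) * (Real.log N - c)⌋₊ : ℝ) ≤ N / (2 * b) * (Real.log N - c) :=
        Nat.floor_le (mul_nonneg (by positivity) (by linarith))
      calc _ ≤ N / (2 * b) * (Real.log N - c) * R N / N := by gcongr
        _ = _ := by field_simp
  have hgG : Tendsto (fun N : ℝ => (1 - D / 2) * b / N * G N) atTop (𝓝 ((1 - D / 2) / 2)) := by
    have h : Tendsto (fun N : ℝ => (1 - D / 2) * b * (1 - R N) / (2 * b + K / N)) atTop
        (𝓝 ((1 - D / 2) * b * (1 - 0) / (2 * b + 0))) :=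
      (tendsto_const_nhds.mul (tendsto_const_nhds.sub hR0)).div
        (tendsto_const_nhds.add (hinv K)) (by positivity)
    have e : (1 - D / 2) * b * (1 - 0) / (2 * b + 0) = (1 - D / 2) / 2 := by
      field_simp; ring
    rw [e] at h
    refine h.congr' ?_
    filter_upwards [eventually_gt_atTop 0] with N hN
    have hk : 0 < 2 * b / N + K / N ^ 2 := by positivity
    have e1 : G N * (2 * b / N + K / N ^ 2) = 1 - R N := by
      have := geom_sum_mul (1 - 2 * b / N - K / N ^ 2) ⌊N / (2 * b) * (Real.log N - c)⌋₊
      simp only [hG, hR]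
      linarith
    rw [← e1]
    field_simp
  have h1 : Tendsto (fun N : ℝ => Real.exp (-(D * (N * R N / 2)) -
      D * ((1 - D / 2) * b / N * G N))) atTop
      (𝓝 (Real.exp (-(D * (Real.exp c / 2)) - D * ((1 - D / 2) / 2)))) :=
    (Real.continuous_exp.tendsto _).comp
      ((tendsto_const_nhds.mul (hNR.div_const 2)).neg.sub (tendsto_const_nhds.mul hgG))
  have h2 : Tendsto (fun N : ℝ => 2 * D * ((ε + (1 / (4 * b * ε)) / N) *
      ((1 - D / 2) * b / N * G N)) + D * (1 - D / 2) * b / ε *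
        ((⌊N / (2 * b) * (Real.log N - c)⌋₊ : ℝ) * R N / N)) atTop
      (𝓝 (2 * D * ((ε + 0) * ((1 - D / 2) / 2)) + D * (1 - D / 2) * b / ε * 0)) :=
    (tendsto_const_nhds.mul ((tendsto_const_nhds.add (hinv _)).mul hgG)).add
      (tendsto_const_nhds.mul hTR)
  have h3 := h1.add h2
  have e : 2 * D * ((ε + 0) * ((1 - D / 2) / 2)) + D * (1 - D / 2) * b / ε * 0 =
    D * (1 - D / 2) * ε := by ring
  rw [e] at h3
  refine h3.congr' ?_
  filter_upwards [eventually_gt_atTop 0] with N hN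
  have e1 : (1 - 2 * b / N - K / N ^ 2) ^ ⌊N / (2 * b) * (Real.log N - c)⌋₊ = R N := rfl
  have e2 : ∑ i ∈ Finset.range ⌊N / (2 * b) * (Real.log N - c)⌋₊,
          (1 - 2 * b / N - K / N ^ 2) ^ i = G N := rfl
  rw [e1, e2]
  congr 1
  · congr 1; ring
  · field_simp
    ring

open Filter Topology in
lemma r_tendsto (b K : ℝ) :
    Tendsto (fun N : ℝ => 1 - 2 * b / N - K / N ^ 2) atTop (𝓝 1) := by
  have h1 : Tendsto (fun N : ℝ => 2 * b / N) atTop (𝓝 0) :=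
    tendsto_const_nhds.div_atTop tendsto_id
  have h2 : Tendsto (fun N : ℝ => K / N ^ 2) atTop (𝓝 0) :=
    tendsto_const_nhds.div_atTop (tendsto_pow_atTop (by norm_num))
  simpa using ((tendsto_const_nhds (x := (1 : ℝ))).sub h1).sub h2

lemma exponent_ineq {k x : ℝ} (hk : 1 ≤ k) (hx : x / 2 = k ^ 2 - 1) :
    (k - 1) / 2 - ((1 - 1 / k) * (x / 2) + (1 - 1 / k) * ((1 - (1 - 1 / k) / 2) / 2)) ≤
      -(k - 1) ^ 2 := by
  have hk0 : 0 < k := by linarith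
  rw [hx]
  have : -(k - 1) ^ 2 - ((k - 1) / 2 - ((1 - 1 / k) * (k ^ 2 - 1) +
      (1 - 1 / k) * ((1 - (1 - 1 / k) / 2) / 2))) =
      (k - 1) ^ 2 * (2 * k - 1) / (4 * k ^ 2) := by
    field_simp; ring
  have : 0 ≤ (k - 1) ^ 2 * (2 * k - 1) / (4 * k ^ 2) :=
    div_nonneg (mul_nonneg (sq_nonneg _) (by linarith)) (by positivity)
  linarith

/-- Cutoff lower bound: for every fixed `c > 0`,
`liminf_{N→∞} d_TV(P^{t_N}(id, ·), U) ≥ 1 − exp(−(1/2)(√(1 + e^c/2) − 1)²)`,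
where `t_N = ⌊(N/(2b))(log N − c)⌋` and `N = 2n`. -/
theorem brt_lower_bound (a b : ℝ) (hb : 0 < b) (hba : b ≤ a) (hab : a + b = 2)
    (c : ℝ) (hc : 0 < c) :
    ∀ ε : ℝ, 0 < ε → ∃ n0 : ℕ, ∀ n : ℕ, n0 ≤ n →
      ∀ A : Finset (Fin (2 * n)), A.card = n →
        1 - Real.exp (-(1 / 2) * (Real.sqrt (1 + Real.exp c / 2) - 1) ^ 2) - ε ≤
          dTV
            (fun y => (transMat a b A ^
              ⌊((2 * n : ℝ) / (2 * b)) * (Real.log (2 * n) - c)⌋₊) 1 y)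
            (unif (2 * n)) := by
  intro e he
  obtain ⟨k, hk⟩ : ∃ k, k = Real.sqrt (1 + Real.exp c / 2) := ⟨_, rfl⟩
  have hec : 0 < Real.exp c := Real.exp_pos c
  have hksq : k ^ 2 = 1 + Real.exp c / 2 := by rw [hk]; exact Real.sq_sqrt (by positivity)
  have hk1 : 1 ≤ k := by rw [hk, Real.one_le_sqrt]; linarith
  have hk0 : 0 < k := by linarith
  rw [← hk]
  obtain ⟨D, hD⟩ : ∃ D, D = 1 - 1 / k := ⟨_, rfl⟩
  have hki : 1 / k ≤ 1 := by rw [div_le_one hk0]; exact hk1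
  have hki0 : 0 < 1 / k := by positivity
  have hD0 : 0 ≤ D := by linarith
  have hD1 : D < 1 := by linarith
  obtain ⟨u, hu⟩ : ∃ u, u = D * (Real.exp c / 2) + D * ((1 - D / 2) / 2) := ⟨_, rfl⟩
  obtain ⟨v, hv⟩ : ∃ v, v = (k - 1) / 2 := ⟨_, rfl⟩
  have huv : v - u ≤ -(k - 1) ^ 2 := by
    have := exponent_ineq hk1 (show Real.exp c / 2 = k ^ 2 - 1 by linarith)
    rw [hv, hu, hD]; exact this
  obtain ⟨α, hα⟩ : ∃ α, α = Real.exp ((u + v) / 2) := ⟨_, rfl⟩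
  have hα0 : 0 < α := by rw [hα]; positivity
  obtain ⟨η, hη⟩ : ∃ η, η = e / α := ⟨_, rfl⟩
  have hη0 : 0 < η := by rw [hη]; positivity
  obtain ⟨K, hK⟩ : ∃ K, K = 8 + 25 / (1 - D) := ⟨_, rfl⟩
  have hK0 : 0 < K := by
    rw [hK]
    have : 0 < 1 - D := by linarith
    positivity
  have hlim := lim_bound (c := c) (D := D) hb hK0.le hη0
  have hlt : Real.exp (-(D * (Real.exp c / 2)) - D * ((1 - D / 2) / 2)) +
        D * (1 - D / 2) * η < Real.exp (-u) + 2 * η := by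
    have e1 : -(D * (Real.exp c / 2)) - D * ((1 - D / 2) / 2) = -u := by rw [hu]; ring
    rw [e1]
    have : D * (1 - D / 2) ≤ 1 := by nlinarith
    nlinarith
  have hev1 := hlim.eventually_lt_const hlt
  have hev2 := (r_tendsto b K).eventually_const_lt (show (1 / 2 : ℝ) < 1 by norm_num)
  have hNtop : Filter.Tendsto (fun n : ℕ => (2 * n : ℝ)) Filter.atTop Filter.atTop :=
    tendsto_natCast_atTop_atTop.const_mul_atTop (by norm_num)
  have hev := hNtop.eventually (hev1.and (hev2.and
    (Filter.eventually_ge_atTop (max 4 (K / (2 * b))))))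
  obtain ⟨n0, hn0⟩ := Filter.eventually_atTop.mp hev
  refine ⟨n0, fun n hn A hA => ?_⟩
  obtain ⟨b1, b2, b3⟩ := hn0 n hn
  have hN4 : (4 : ℝ) ≤ 2 * n := (le_max_left _ _).trans b3
  have hNK : K / (2 * b) ≤ 2 * n := (le_max_right _ _).trans b3
  have hn2' : (2 : ℝ) ≤ n := by linarith
  have hn2 : 2 ≤ n := by exact_mod_cast hn2'
  have ha : 0 ≤ a := by linarith
  set T := ⌊((2 * n : ℝ) / (2 * b)) * (Real.log (2 * n) - c)⌋₊ with hT
  have hr2 : 1 - 2 * b / n ≤ 1 - 2 * b / (2 * n) - K / (2 * n) ^ 2 := by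
    have h1 : K / (2 * n : ℝ) ^ 2 ≤ 2 * b / (2 * n) := by
      rw [div_le_div_iff₀ (by positivity) (by positivity)]
      rw [div_le_iff₀ (by positivity)] at hNK
      nlinarith
    have h2 : 2 * b / (n : ℝ) = 2 * b / (2 * n) + 2 * b / (2 * n) := by field_simp; ring
    linarith
  have hF := Ex_theta (g := (1 - D / 2) * b / (2 * n)) hb hba hab hn2 A hA hD1 hη0
    (by rw [← hK]) b2.le hr2 rfl T D hD0 le_rfl
  have hnn : (2 * n : ℝ) / 2 = n := by ring
  rw [hnn] at b1
  have hF2 : Ex a b A T (fun y => (1 - D) ^ Xc A y) ≤ Real.exp (-u) + 2 * η := hF.trans b1.le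
  have hTV := dTV_lower (fun y => (transMat a b A ^ T) 1 y) (unif (2 * n))
    (fun y => (1 - D) ^ Xc A y) α hα0 (fun y => pow_pos (by linarith) _)
    (fun y => pow_trans_nonneg ha hb.le A T 1 y) (fun y => by unfold unif; positivity)
    (by
      have := Ex_const hab (show 0 < n by omega) A hA 1 T
      simpa [Ex] using this)
    (by
      simp only [unif, Finset.sum_const, Finset.card_univ, Fintype.card_perm, Fintype.card_fin,
        nsmul_eq_mul]
      exact mul_inv_cancel₀ (by positivity))
  have hinv : ∀ y, ((1 - D) ^ Xc A y)⁻¹ = (1 + (k - 1)) ^ Xc A y := by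
    intro y
    rw [← inv_pow, hD]
    congr 1
    field_simp
    ring
  have hUb : ∑ y, unif (2 * n) y * ((1 - D) ^ Xc A y)⁻¹ ≤ Real.exp v := by
    simp only [hinv]
    rw [hv]
    exact unif_bound A hA (by linarith)
  refine le_trans ?_ hTV
  have hF3 : ∑ y, (transMat a b A ^ T) 1 y * (1 - D) ^ Xc A y ≤ Real.exp (-u) + 2 * η := hF2
  have c1 : α * ∑ y, (transMat a b A ^ T) 1 y * (1 - D) ^ Xc A y ≤
      Real.exp ((v - u) / 2) + 2 * e := by
    refine (mul_le_mul_of_nonneg_left hF3 hα0.le).trans (le_of_eq ?_)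
    have d1 : α * Real.exp (-u) = Real.exp ((v - u) / 2) := by
      rw [hα, ← Real.exp_add]; congr 1; ring
    have d2 : α * η = e := by rw [hη]; field_simp
    rw [mul_add, d1]
    linarith
  have c2 : (∑ y, unif (2 * n) y * ((1 - D) ^ Xc A y)⁻¹) / α ≤ Real.exp ((v - u) / 2) := by
    rw [div_le_iff₀ hα0, hα, ← Real.exp_add]
    have : (v - u) / 2 + (u + v) / 2 = v := by ring
    rw [this]; exact hUb
  have c3 : Real.exp ((v - u) / 2) ≤ Real.exp (-(1 / 2) * (k - 1) ^ 2) := by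
    apply Real.exp_le_exp.mpr; linarith
  linarith

end BRT
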